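/- The two-sided ideal of H_{t,c} generated by the element 1 + s is equal to H_{t,c} if and only if 2c ≠ −t. Equivalently, for the symmetrizing idempotent e = (1 + s)/2, one has H_{t,c}·e·H_{t,c} = H_{t,c} if and only if 2c + t ≠ 0. -/

import Mathlib

/-!
Modulo `1 + s` one has `s = -1`, so the relations `s x + x s = 0` and `s ξ + ξ s = 0` force
`x = ξ = 0`, and the commutation relation becomes the scalar identity `2c + t = 0`. Hence the
quotient of `H_{t,c}` by the ideal is `ℂ / (2c + t)`: the ideal contains the scalar `2c + t`, and
when this scalar vanishes, `s ↦ -1`, `x, ξ ↦ 0` is a character of `H_{t,c}` killing `1 + s`.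
-/

open FreeAlgebra

/-- The defining relations of the rational Cherednik algebra `H_{t,c}` of type `A₁`,
on the free algebra on three generators `s = ι 0`, `x = ι 1`, `ξ = ι 2`:
`s² - 1`, `s x + x s`, `s ξ + ξ s` and `ξ x - x ξ - t 1 + 2 c s`. -/
inductive CherednikRel (t c : ℂ) : FreeAlgebra ℂ (Fin 3) → FreeAlgebra ℂ (Fin 3) → Prop
  | s_sq : CherednikRel t c (ι ℂ (0 : Fin 3) * ι ℂ (0 : Fin 3) - 1) 0
  | s_x : CherednikRel t c (ι ℂ (0 : Fin 3) * ι ℂ (1 : Fin 3) + ι ℂ (1 : Fin 3) * ι ℂ (0 : Fin 3)) 0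
  | s_xi : CherednikRel t c (ι ℂ (0 : Fin 3) * ι ℂ (2 : Fin 3) + ι ℂ (2 : Fin 3) * ι ℂ (0 : Fin 3)) 0
  | xi_x : CherednikRel t c
      (ι ℂ (2 : Fin 3) * ι ℂ (1 : Fin 3) - ι ℂ (1 : Fin 3) * ι ℂ (2 : Fin 3) -
        algebraMap ℂ (FreeAlgebra ℂ (Fin 3)) t + (2 * c) • ι ℂ (0 : Fin 3)) 0

/-- The rational Cherednik algebra `H_{t,c}` of type `A₁`. -/
abbrev CherednikA1 (t c : ℂ) := RingQuot (CherednikRel t c)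

/-- The generator `s` of `H_{t,c}`. -/
noncomputable def CherednikA1.S (t c : ℂ) : CherednikA1 t c :=
  RingQuot.mkAlgHom ℂ (CherednikRel t c) (ι ℂ (0 : Fin 3))

/-- An element `y` anticommuting with `s` lies in every two-sided ideal containing `1 + s`, since
`(1 + s) y + y (1 + s) = 2 y`. -/
theorem CherednikA1.mem_of_anticomm {A : Type*} [Ring A] [Algebra ℂ A] (I : TwoSidedIdeal A)
    {s y : A} (hs : 1 + s ∈ I) (h : s * y + y * s = 0) : y ∈ I := by
  have h2 : (1 + s) * y + y * (1 + s) ∈ I :=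
    I.add_mem (I.mul_mem_right _ _ hs) (I.mul_mem_left _ _ hs)
  have e : (1 + s) * y + y * (1 + s) = (2 : ℂ) • y := by
    rw [two_smul]
    calc (1 + s) * y + y * (1 + s) = y + y + (s * y + y * s) := by noncomm_ring
      _ = y + y := by rw [h, add_zero]
  rw [e] at h2
  have h3 := I.mul_mem_left (algebraMap ℂ A (1 / 2)) _ h2
  rwa [← Algebra.smul_def, smul_smul, one_div_mul_cancel two_ne_zero, one_smul] at h3

/-- For `2c + t = 0`, the character `s ↦ -1`, `x, ξ ↦ 0` of `H_{t,c}`. -/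
noncomputable def CherednikA1.signChar (t c : ℂ) (h : 2 * c + t = 0) :
    CherednikA1 t c →ₐ[ℂ] ℂ :=
  RingQuot.liftAlgHom ℂ ⟨FreeAlgebra.lift ℂ ![-1, 0, 0], by
    intro a b hab
    cases hab
    case xi_x =>
      simp
      linear_combination -h
    all_goals simp⟩

theorem CherednikA1.signChar_S (t c : ℂ) (h : 2 * c + t = 0) :
    CherednikA1.signChar t c h (CherednikA1.S t c) = -1 := by
  simp [CherednikA1.signChar, CherednikA1.S]

/-- The two-sided ideal of `H_{t,c}` generated by `1 + s` is the whole algebra if and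
only if `2c + t ≠ 0`; equivalently, `H e H = H` for the symmetrizing idempotent
`e = (1+s)/2` if and only if `2c ≠ -t`. -/
theorem cherednikA1_eHe_eq_top_iff (t c : ℂ) :
    TwoSidedIdeal.span ({1 + CherednikA1.S t c} : Set (CherednikA1 t c)) = ⊤ ↔
      2 * c + t ≠ 0 := by
  constructor
  · intro htop h0
    have hle : TwoSidedIdeal.span ({1 + CherednikA1.S t c} : Set (CherednikA1 t c)) ≤
        TwoSidedIdeal.ker (CherednikA1.signChar t c h0) := by
      rw [TwoSidedIdeal.span_le, Set.singleton_subset_iff, SetLike.mem_coe,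
        TwoSidedIdeal.mem_ker, map_add, map_one, CherednikA1.signChar_S, add_neg_cancel]
    have h1 : (1 : CherednikA1 t c) ∈ TwoSidedIdeal.ker (CherednikA1.signChar t c h0) :=
      hle (htop ▸ trivial)
    rw [TwoSidedIdeal.mem_ker, map_one] at h1
    exact one_ne_zero h1
  · intro hne
    set I := TwoSidedIdeal.span ({1 + CherednikA1.S t c} : Set (CherednikA1 t c)) with hI
    have hs : 1 + CherednikA1.S t c ∈ I := TwoSidedIdeal.subset_span rfl
    let π := RingQuot.mkAlgHom ℂ (CherednikRel t c)
    have hx : π (ι ℂ 1) ∈ I := by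
      refine CherednikA1.mem_of_anticomm I hs ?_
      simpa [π, CherednikA1.S] using RingQuot.mkAlgHom_rel ℂ (CherednikRel.s_x (t := t) (c := c))
    have hxi : π (ι ℂ 2) ∈ I := by
      refine CherednikA1.mem_of_anticomm I hs ?_
      simpa [π, CherednikA1.S] using RingQuot.mkAlgHom_rel ℂ (CherednikRel.s_xi (t := t) (c := c))
    have hrel : π (ι ℂ 2) * π (ι ℂ 1) - π (ι ℂ 1) * π (ι ℂ 2) - algebraMap ℂ _ t
        + algebraMap ℂ _ (2 * c) * CherednikA1.S t c = 0 := by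
      have := RingQuot.mkAlgHom_rel ℂ (CherednikRel.xi_x (t := t) (c := c))
      rw [map_add, map_sub, map_sub, map_mul, map_mul, map_smul, AlgHom.commutes, map_zero,
        Algebra.smul_def] at this
      exact this
    have hscalar : algebraMap ℂ (CherednikA1 t c) (2 * c + t) ∈ I := by
      have hmem := I.add_mem
        (I.sub_mem (I.mul_mem_left (π (ι ℂ 2)) _ hx) (I.mul_mem_left (π (ι ℂ 1)) _ hxi))
        (I.mul_mem_left (algebraMap ℂ _ (2 * c)) _ hs)
      convert hmem using 1
      rw [map_add, ← sub_eq_zero, ← neg_eq_zero, ← hrel, mul_add, mul_one]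
      abel
    have hone := I.mul_mem_left (algebraMap ℂ (CherednikA1 t c) (2 * c + t)⁻¹) _ hscalar
    rw [← map_mul, inv_mul_cancel₀ hne, map_one] at hone
    exact (TwoSidedIdeal.one_mem_iff I).1 hone
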